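/- If x, z ∈ σᵢ(D), dᵢ(x,z) < r(x), and z ∈ σⱼ(D) for some j ∈ I, then x ∈ σⱼ(D) and dᵢ(x,z) = dⱼ(x,z). -/

import Mathlib

noncomputable section

open Set
open scoped ENNReal

/-- The Euclidean plane `ℝ²` with the Euclidean metric. -/
abbrev E2 : Type := EuclideanSpace ℝ (Fin 2)

/-- Vertices of the fixed closed regular (equilateral) triangle of side length 1. -/
def p0 : E2 := !₂[0, 0]
def p1 : E2 := !₂[1, 0]
def p2 : E2 := !₂[1 / 2, Real.sqrt 3 / 2]

/-- `Dtri` is the fixed closed regular triangle in `ℝ²` with edge length 1. -/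
def Dtri : Set E2 := convexHull ℝ {p0, p1, p2}

/-- `V0` is the set of the three vertices of `Dtri`. -/
def V0 : Set E2 := {p0, p1, p2}

/-- The three closed edges of `Dtri`. -/
def e01 : Set E2 := segment ℝ p0 p1
def e12 : Set E2 := segment ℝ p1 p2
def e02 : Set E2 := segment ℝ p0 p2

/-- `E0` is the set of the three closed edges of `Dtri`. -/
def E0 : Set (Set E2) := {e01, e12, e02}

/-- The open edge `e° = e ∖ V₀`. -/
def eo (e : Set E2) : Set E2 := e \ V0

/-- `Do = D°` is the interior of `Dtri` in `ℝ²`. -/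
def Do : Set E2 := interior Dtri

/-- `l : E₀ → ℝ` is positive and satisfies the strict triangle inequalities:
`l e₁ + l e₂ > l e₃` whenever `{e₁, e₂, e₃} = E₀`. -/
def TriIneq (l : Set E2 → ℝ) : Prop :=
  (∀ e ∈ E0, 0 < l e) ∧
  ∀ e₁ e₂ e₃ : Set E2, ({e₁, e₂, e₃} : Set (Set E2)) = E0 → l e₁ + l e₂ > l e₃

/-- A linear map `f : ℝ² → ℝ²` realizes the edge lengths `l`, i.e. for each `e ∈ E₀`
the segment `f(e)` has Euclidean length `l e`. -/
def Realizes (f : E2 →ₗ[ℝ] E2) (l : Set E2 → ℝ) : Prop :=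
  dist (f p0) (f p1) = l e01 ∧ dist (f p1) (f p2) = l e12 ∧ dist (f p0) (f p2) = l e02

/-- The metric `d[l]` on `Dtri`, defined by `d[l](x,y) = |f x - f y|₂` for a linear map `f`
realizing the edge lengths `l` (this is independent of the choice of `f`). -/
def dD (l : Set E2 → ℝ) (x y : E2) : ℝ :=
  letI := Classical.propDecidable (∃ f : E2 →ₗ[ℝ] E2, Realizes f l)
  if h : ∃ f : E2 →ₗ[ℝ] E2, Realizes f l then dist (h.choose x) (h.choose y) else 0

/-- A triangulation `T = (σᵢ)_{i ∈ I}`, `I = Fin n`, of a topological space `S`: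
a finite family of continuous maps `σᵢ : Dtri → S` such that
(a) `σᵢ` is injective on each open edge, (b) `σᵢ` is injective on `D°`,
(c) `S` is the disjoint union of `⋃ᵢ σᵢ(V₀)`, the sets `σᵢ(D°)`, and the distinct sets
among the `σᵢ(e°)`, and (d) glued edges are identified by a linear homeomorphism. -/
structure Triangulation (S : Type) [TopologicalSpace S] (n : ℕ) where
  σ : Fin n → E2 → S
  continuousOn : ∀ i, ContinuousOn (σ i) Dtri
  inj_edge : ∀ i, ∀ e ∈ E0, InjOn (σ i) (eo e)
  inj_int : ∀ i, InjOn (σ i) Do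
  cover : (⋃ i, σ i '' V0) ∪ (⋃ i, σ i '' Do) ∪ (⋃ i, ⋃ e ∈ E0, σ i '' eo e) = univ
  disj_int : ∀ i j, i ≠ j → Disjoint (σ i '' Do) (σ j '' Do)
  disj_vert_int : ∀ j, Disjoint (⋃ i, σ i '' V0) (σ j '' Do)
  disj_vert_edge : ∀ j, ∀ e ∈ E0, Disjoint (⋃ i, σ i '' V0) (σ j '' eo e)
  disj_int_edge : ∀ i j, ∀ e ∈ E0, Disjoint (σ i '' Do) (σ j '' eo e)
  edge_eq_or_disjoint : ∀ i j, ∀ e ∈ E0, ∀ e' ∈ E0,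
    σ i '' eo e = σ j '' eo e' ∨ Disjoint (σ i '' eo e) (σ j '' eo e')
  glue : ∀ i j, ∀ e ∈ E0, ∀ e' ∈ E0, σ i '' eo e = σ j '' eo e' →
    ∃ A : E2 →ᵃ[ℝ] E2, A '' e = e' ∧ ∀ x ∈ e, σ j (A x) = σ i x

variable {S : Type} [TopologicalSpace S] {n : ℕ}

/-- `l ∈ ℝ^{E(T)}_Δ`: `l` assigns positive lengths to the edges of `T` satisfying the
strict triangle inequalities in each triangle. -/
def TriIneqT (T : Triangulation S n) (l : Set S → ℝ) : Prop :=
  (∀ (i : Fin n), ∀ e ∈ E0, 0 < l (T.σ i '' e)) ∧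
  ∀ (i : Fin n), ∀ e₁ e₂ e₃ : Set E2, ({e₁, e₂, e₃} : Set (Set E2)) = E0 →
    l (T.σ i '' e₁) + l (T.σ i '' e₂) > l (T.σ i '' e₃)

/-- The restricted edge lengths `l^{(i)}` on the triangle `σᵢ(D)`: `l^{(i)}_e = l_{σᵢ(e)}`. -/
def lRes (T : Triangulation S n) (l : Set S → ℝ) (i : Fin n) : Set E2 → ℝ :=
  fun e => l (T.σ i '' e)

/-- `dᵢ(x,y) = min { d[l^{(i)}](x',y') : x' ∈ σᵢ⁻¹(x), y' ∈ σᵢ⁻¹(y) }` for `x, y ∈ σᵢ(D)`. -/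
def dTri (T : Triangulation S n) (l : Set S → ℝ) (i : Fin n) (x y : S) : ℝ :=
  sInf { r | ∃ x' ∈ Dtri, ∃ y' ∈ Dtri,
    T.σ i x' = x ∧ T.σ i y' = y ∧ r = dD (lRes T l i) x' y' }

/-- The set of sums `Σ_j d_{i_j}(x_{j-1}, x_j)` over chains from `x` to `y`. -/
def chainSums (T : Triangulation S n) (l : Set S → ℝ) (x y : S) : Set ℝ :=
  { r | ∃ (k : ℕ) (c : ℕ → S) (idx : ℕ → Fin n),
      c 0 = x ∧ c k = y ∧
      (∀ j < k, c j ∈ T.σ (idx j) '' Dtri ∧ c (j + 1) ∈ T.σ (idx j) '' Dtri) ∧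
      r = ∑ j ∈ Finset.range k, dTri T l (idx j) (c j) (c (j + 1)) }

/-- The glued metric `d[l]` on `S`. -/
def dGlue (T : Triangulation S n) (l : Set S → ℝ) (x y : S) : ℝ :=
  sInf (chainSums T l x y)

/-- `K(x)`: the union of the edges of `Dtri` not containing `x`. -/
def Kset (x : E2) : Set E2 := ⋃₀ {e ∈ E0 | x ∉ e}

/-- The distance from `x` to `K(x)` in `(Dtri, d[l'])`. -/
def rObs (l' : Set E2 → ℝ) (x : E2) : ℝ := sInf { r | ∃ y ∈ Kset x, r = dD l' x y }

/-- `r(x) = min { rᵢ(x') : i ∈ I, x' ∈ σᵢ⁻¹(x) }` for `x ∈ S`. -/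
def rS (T : Triangulation S n) (l : Set S → ℝ) (x : S) : ℝ :=
  sInf { r | ∃ i : Fin n, ∃ x' ∈ Dtri, T.σ i x' = x ∧ r = rObs (lRes T l i) x' }

/-! If `d[l^{(i)}](x', z') < r(x)` with `x'` over `x`, then `x'` lies on every edge of `D` through
`z'`, that is, on the smallest face containing `z'`. When `z'` is interior, only `σᵢ` reaches its
image; when it is a vertex, `x' = z'`; when it lies on an open edge, `σⱼ` covers the image of that
edge through an affine regluing, which is an isometry because both copies of the edge have the same
length. In each case `(x', z')` can be replaced by a pair in the `j`-th triangle at the same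
distance, so `dⱼ(x, z) ≤ dᵢ(x, z) < r(x)`, and the roles of `i` and `j` may be exchanged. -/

section AffineGeometry

variable {E F G : Type*} [AddCommGroup E] [Module ℝ E]
  [NormedAddCommGroup F] [NormedSpace ℝ F] [NormedAddCommGroup G] [NormedSpace ℝ G]

theorem diam_image_segment (g : E →ᵃ[ℝ] F) (a b : E) :
    Metric.diam (g '' segment ℝ a b) = dist (g a) (g b) := by
  rw [image_segment, ← convexHull_pair, convexHull_diam, Metric.diam_pair]

theorem dist_map_eq_of_diam_image_segment_eq {g : E →ᵃ[ℝ] F} {h : E →ᵃ[ℝ] G} {a b x z : E}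
    (hgh : Metric.diam (g '' segment ℝ a b) = Metric.diam (h '' segment ℝ a b))
    (hx : x ∈ segment ℝ a b) (hz : z ∈ segment ℝ a b) :
    dist (g x) (g z) = dist (h x) (h z) := by
  rw [diam_image_segment, diam_image_segment] at hgh
  rw [segment_eq_image_lineMap] at hx hz
  obtain ⟨s, -, rfl⟩ := hx
  obtain ⟨t, -, rfl⟩ := hz
  simp only [AffineMap.apply_lineMap, dist_lineMap_lineMap, hgh]

theorem segment_eq_setOf_coord {ι : Type*} [Finite ι] (b : AffineBasis ι ℝ E) {i j : ι}
    (hij : i ≠ j) :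
    segment ℝ (b i) (b j) =
      {w | (∀ k, 0 ≤ b.coord k w) ∧ ∀ k, k ≠ i ∧ k ≠ j → b.coord k w = 0} := by
  cases nonempty_fintype ι
  ext w
  constructor
  · intro hw
    refine ⟨?_, fun k hk => ?_⟩
    · have : w ∈ convexHull ℝ (range b) :=
        segment_subset_convexHull (mem_range_self i) (mem_range_self j) hw
      rwa [b.convexHull_eq_nonneg_coord] at this
    · rw [segment_eq_image_lineMap] at hw
      obtain ⟨t, -, rfl⟩ := hw
      simp only [AffineMap.apply_lineMap, b.coord_apply_ne hk.1, b.coord_apply_ne hk.2,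
        AffineMap.lineMap_same_apply]
  · rintro ⟨hnonneg, hzero⟩
    refine ⟨b.coord i w, b.coord j w, hnonneg i, hnonneg j, ?_, ?_⟩
    · rw [← b.sum_coord_apply_eq_one w, Fintype.sum_eq_add i j hij hzero]
    · rw [← Fintype.sum_eq_add (f := fun k => b.coord k w • b k) i j hij
        fun k hk => by simp only [hzero k hk, zero_smul], b.linear_combination_coord_eq_self]

theorem exists_linearMap_sub_eq {ι M : Type*} [Finite ι] [AddCommGroup M] [Module ℝ M]
    (b : AffineBasis ι ℝ E) (q : ι → M) :
    ∃ f : E →ₗ[ℝ] M, ∀ i j, f (b i) - f (b j) = q i - q j := by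
  classical
  cases nonempty_fintype ι
  refine ⟨∑ k, (b.coord k).linear.smulRight (q k), fun i j => ?_⟩
  have hcoord : ∀ k, (b.coord k).linear (b i - b j) = b.coord k (b i) - b.coord k (b j) :=
    fun k => (b.coord k).linearMap_vsub (b i) (b j)
  rw [← map_sub]
  simp only [LinearMap.sum_apply, LinearMap.smulRight_apply, hcoord, b.coord_apply, sub_smul,
    ite_smul, one_smul, zero_smul, Finset.sum_sub_distrib, Finset.sum_ite_eq', Finset.mem_univ,
    if_true]

end AffineGeometry

theorem exists_norm_eq_norm_eq_dist_eq {a b c : ℝ} (hab : c ≤ a + b) (hbc : a ≤ b + c)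
    (hca : b ≤ c + a) :
    ∃ u v : E2, ‖u‖ = a ∧ ‖v‖ = b ∧ dist u v = c := by
  have ha : 0 ≤ a := by linarith
  have hb : 0 ≤ b := by linarith
  have hc : 0 ≤ c := by linarith
  -- The law of cosines prescribes the abscissa `t` of `v` when `u` lies on the first axis.
  obtain ⟨t, ht, htb⟩ : ∃ t : ℝ, 2 * a * t = a ^ 2 + b ^ 2 - c ^ 2 ∧ t ^ 2 ≤ b ^ 2 := by
    rcases ha.eq_or_lt with rfl | ha
    · exact ⟨0, by rw [show b = c by linarith]; ring, by simpa using sq_nonneg b⟩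
    · refine ⟨(a ^ 2 + b ^ 2 - c ^ 2) / (2 * a), by field_simp, ?_⟩
      rw [div_pow, div_le_iff₀ (by positivity)]
      have heron : 0 ≤ ((a + b) ^ 2 - c ^ 2) * (c ^ 2 - (a - b) ^ 2) :=
        mul_nonneg (by nlinarith) (by nlinarith)
      linarith
  have hs : √(b ^ 2 - t ^ 2) ^ 2 = b ^ 2 - t ^ 2 := Real.sq_sqrt (by linarith)
  refine ⟨!₂[a, 0], !₂[t, √(b ^ 2 - t ^ 2)], ?_, ?_, ?_⟩
  · simp [EuclideanSpace.norm_eq, ha]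
  · simp [EuclideanSpace.norm_eq, hs, hb]
  · rw [EuclideanSpace.dist_eq, Real.sqrt_eq_iff_eq_sq (by positivity) hc]
    simp only [Fin.sum_univ_two, Real.dist_eq, sq_abs, Matrix.cons_val_zero, Matrix.cons_val_one]
    linarith

section ReferenceTriangle

theorem affineIndependent_vertices : AffineIndependent ℝ ![p0, p1, p2] := by
  rw [affineIndependent_iff_not_collinear_set, collinear_iff_of_mem (mem_insert p0 _)]
  rintro ⟨v, hv⟩
  obtain ⟨r, hr⟩ := hv p1 (by simp)
  obtain ⟨s, hs⟩ := hv p2 (by simp)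
  have hr0 : 1 = r * v 0 := by simpa [p0, p1] using congr($hr 0)
  have hr1 : r = 0 ∨ v 1 = 0 := by simpa [p0, p1] using congr($hr 1)
  have hs1 : √3 / 2 = s * v 1 := by simpa [p0, p2] using congr($hs 1)
  rcases hr1 with hr1 | hv1
  · simp [hr1] at hr0
  · simp [hv1] at hs1

/-- The vertices `p0`, `p1`, `p2` as an affine basis of the plane; its coordinates are the
barycentric coordinates with respect to `Dtri`. -/
def vertexBasis : AffineBasis (Fin 3) ℝ E2 where
  toFun := ![p0, p1, p2]
  ind' := affineIndependent_vertices
  tot' := by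
    rw [affineIndependent_vertices.affineSpan_eq_top_iff_card_eq_finrank_add_one]
    simp

theorem range_vertexBasis : range vertexBasis = V0 := by
  change range ![p0, p1, p2] = {p0, p1, p2}
  simp only [Matrix.range_cons, Matrix.range_empty, union_empty, singleton_union]

theorem mem_Dtri_iff {w : E2} : w ∈ Dtri ↔ ∀ k, 0 ≤ vertexBasis.coord k w := by
  change w ∈ convexHull ℝ V0 ↔ _
  rw [← range_vertexBasis, vertexBasis.convexHull_eq_nonneg_coord, mem_ofPred_eq]

theorem mem_Do_iff {w : E2} : w ∈ Do ↔ ∀ k, 0 < vertexBasis.coord k w := by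
  change w ∈ interior (convexHull ℝ V0) ↔ _
  rw [← range_vertexBasis, vertexBasis.interior_convexHull, mem_ofPred_eq]

theorem V0_subset_Dtri : V0 ⊆ Dtri :=
  subset_convexHull ℝ V0

theorem edge_subset_Dtri {e : Set E2} (he : e ∈ E0) : e ⊆ Dtri := by
  rcases he with rfl | rfl | rfl <;> exact segment_subset_convexHull (by simp) (by simp)

/-- The edge of `Dtri` opposite the `k`-th vertex, as the zero locus of a barycentric
coordinate. -/
def oppositeEdge (k : Fin 3) : Set E2 := {w ∈ Dtri | vertexBasis.coord k w = 0}

theorem segment_vertexBasis {i j k : Fin 3} (hijk : i ≠ j ∧ k ≠ i ∧ k ≠ j) :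
    segment ℝ (vertexBasis i) (vertexBasis j) = oppositeEdge k := by
  have hk : ∀ m, m ≠ i ∧ m ≠ j ↔ m = k := by lia
  ext w
  simp only [segment_eq_setOf_coord vertexBasis hijk.1, oppositeEdge, hk, forall_eq, mem_Dtri_iff]

theorem oppositeEdge_mem_E0 (k : Fin 3) : oppositeEdge k ∈ E0 := by
  fin_cases k
  · have h : e12 = oppositeEdge 0 := segment_vertexBasis (i := 1) (j := 2) (by decide)
    exact .inr (.inl h.symm)
  · have h : e02 = oppositeEdge 1 := segment_vertexBasis (i := 0) (j := 2) (by decide)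
    exact .inr (.inr h.symm)
  · have h : e01 = oppositeEdge 2 := segment_vertexBasis (i := 0) (j := 1) (by decide)
    exact .inl h.symm

theorem mem_Do_or_mem_V0_or_mem_eo {w : E2} (hw : w ∈ Dtri) :
    w ∈ Do ∨ w ∈ V0 ∨ ∃ e ∈ E0, w ∈ eo e := by
  by_cases hpos : ∀ k, 0 < vertexBasis.coord k w
  · exact .inl (mem_Do_iff.2 hpos)
  · push Not at hpos
    obtain ⟨k, hk⟩ := hpos
    have hwk : w ∈ oppositeEdge k := ⟨hw, hk.antisymm (mem_Dtri_iff.1 hw k)⟩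
    exact .inr (or_iff_not_imp_left.2 fun hV => ⟨_, oppositeEdge_mem_E0 k, hwk, hV⟩)

theorem eq_of_mem_V0_of_forall_edge {v w : E2} (hv : v ∈ V0) (h : ∀ e ∈ E0, v ∈ e → w ∈ e) :
    w = v := by
  have hvD := V0_subset_Dtri hv
  obtain ⟨i, rfl⟩ := range_vertexBasis.symm ▸ hv
  have hzero : ∀ k, k ≠ i → vertexBasis.coord k w = 0 := fun k hk =>
    (h _ (oppositeEdge_mem_E0 k) ⟨hvD, vertexBasis.coord_apply_ne hk⟩).2
  have hone : vertexBasis.coord i w = 1 := by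
    rw [← vertexBasis.sum_coord_apply_eq_one w, Fintype.sum_eq_single i hzero]
  rw [← vertexBasis.linear_combination_coord_eq_self w,
    Fintype.sum_eq_single i fun k hk => by rw [hzero k hk, zero_smul], hone, one_smul]

end ReferenceTriangle

section EdgeLengths

variable {l : Set E2 → ℝ}

/-- `l` gives the edge lengths of a Euclidean triangle, possibly degenerate: the condition under
which `dD l` is the pulled-back Euclidean distance and not the default value `0`. -/
def Realizable (l : Set E2 → ℝ) : Prop := ∃ f : E2 →ₗ[ℝ] E2, Realizes f l

theorem TriIneq.realizable (h : TriIneq l) : Realizable l := by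
  have h₁ : l e12 < l e01 + l e02 := h.2 e01 e02 e12 (by rw [E0, pair_comm e02])
  have h₂ : l e01 < l e02 + l e12 :=
    h.2 e02 e12 e01 (by rw [E0, pair_comm, insert_comm, pair_comm e02])
  have h₃ : l e02 < l e12 + l e01 := h.2 e12 e01 e02 (insert_comm _ _ _)
  obtain ⟨u, v, hu, hv, huv⟩ := exists_norm_eq_norm_eq_dist_eq h₁.le h₂.le h₃.le
  obtain ⟨f, hf⟩ := exists_linearMap_sub_eq vertexBasis ![0, u, v]
  have hdist : ∀ i j, dist (f (vertexBasis i)) (f (vertexBasis j)) =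
      dist (![0, u, v] i) (![0, u, v] j) := by
    intro i j
    rw [dist_eq_norm, hf, dist_eq_norm]
  exact ⟨f, (hdist 0 1).trans ((dist_zero_left u).trans hu), (hdist 1 2).trans huv,
    (hdist 0 2).trans ((dist_zero_left v).trans hv)⟩

theorem dD_self (l : Set E2 → ℝ) (x : E2) : dD l x x = 0 := by
  unfold dD
  split_ifs
  · exact dist_self _
  · rfl

theorem dD_nonneg (l : Set E2 → ℝ) (x y : E2) : 0 ≤ dD l x y := by
  unfold dD
  split_ifs
  · exact dist_nonneg
  · exact le_rfl

theorem Realizable.exists_dD_eq_dist (h : Realizable l) :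
    ∃ f : E2 →ₗ[ℝ] E2, Realizes f l ∧ ∀ x y, dD l x y = dist (f x) (f y) :=
  ⟨h.choose, h.choose_spec, fun _ _ => dif_pos h⟩

theorem Realizes.diam_image_edge {f : E2 →ₗ[ℝ] E2} (h : Realizes f l) {e : Set E2} (he : e ∈ E0) :
    Metric.diam (f '' e) = l e := by
  rcases he with rfl | rfl | rfl
  · exact (diam_image_segment f.toAffineMap p0 p1).trans h.1
  · exact (diam_image_segment f.toAffineMap p1 p2).trans h.2.1
  · exact (diam_image_segment f.toAffineMap p0 p2).trans h.2.2

theorem dD_map_eq_of_image_edge_eq {l' : Set E2 → ℝ} (hl : Realizable l) (hl' : Realizable l')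
    {e e' : Set E2} (he : e ∈ E0) (he' : e' ∈ E0) (hlen : l e = l' e') {A : E2 →ᵃ[ℝ] E2}
    (hA : A '' e = e') {x z : E2} (hx : x ∈ e) (hz : z ∈ e) :
    dD l' (A x) (A z) = dD l x z := by
  obtain ⟨f, hf, hdf⟩ := hl.exists_dD_eq_dist
  obtain ⟨f', hf', hdf'⟩ := hl'.exists_dD_eq_dist
  have hdiam : Metric.diam (f'.toAffineMap.comp A '' e) = Metric.diam (f.toAffineMap '' e) :=
    calc Metric.diam (f'.toAffineMap.comp A '' e)
      _ = Metric.diam (f' '' e') := by rw [← hA, image_image]; rfl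
      _ = Metric.diam (f '' e) := by rw [hf'.diam_image_edge he', hf.diam_image_edge he, hlen]
  obtain ⟨a, b, rfl⟩ : ∃ a b, e = segment ℝ a b := by
    rcases he with rfl | rfl | rfl <;> exact ⟨_, _, rfl⟩
  rw [hdf, hdf']
  exact dist_map_eq_of_diam_image_segment_eq hdiam hx hz

end EdgeLengths

namespace Triangulation

variable (T : Triangulation S n) {i j : Fin n} {w z : E2}

theorem eq_of_apply_eq_of_mem_Do (hz : z ∈ Do) (hw : w ∈ Dtri) (h : T.σ j w = T.σ i z) :
    i = j := by
  by_contra hij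
  have hzi : T.σ i z ∈ T.σ i '' Do := mem_image_of_mem _ hz
  rcases mem_Do_or_mem_V0_or_mem_eo hw with hw | hw | ⟨e, he, hw⟩
  · exact (T.disj_int i j hij).ne_of_mem hzi (mem_image_of_mem _ hw) h.symm
  · exact (T.disj_vert_int i).ne_of_mem (mem_iUnion.2 ⟨j, mem_image_of_mem _ hw⟩) hzi h
  · exact (T.disj_int_edge i j e he).ne_of_mem hzi (mem_image_of_mem _ hw) h.symm

theorem exists_image_eo_eq {e : Set E2} (he : e ∈ E0) (hz : z ∈ eo e) (hw : w ∈ Dtri)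
    (h : T.σ j w = T.σ i z) : ∃ e' ∈ E0, T.σ i '' eo e = T.σ j '' eo e' := by
  have hzi : T.σ i z ∈ T.σ i '' eo e := mem_image_of_mem _ hz
  rcases mem_Do_or_mem_V0_or_mem_eo hw with hw | hw | ⟨e', he', hw⟩
  · exact absurd h ((T.disj_int_edge j i e he).ne_of_mem (mem_image_of_mem _ hw) hzi)
  · exact absurd h
      ((T.disj_vert_edge i e he).ne_of_mem (mem_iUnion.2 ⟨j, mem_image_of_mem _ hw⟩) hzi)
  · refine ⟨e', he', (T.edge_eq_or_disjoint i j e he e' he').resolve_right fun hdisj => ?_⟩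
    exact hdisj.ne_of_mem hzi (mem_image_of_mem _ hw) h.symm

end Triangulation

section GluedDistance

variable {T : Triangulation S n} {l : Set S → ℝ} {i j : Fin n} {x' z' : E2} {x z : S}

theorem TriIneqT.realizable (hl : TriIneqT T l) (i : Fin n) : Realizable (lRes T l i) :=
  TriIneq.realizable ⟨hl.1 i, hl.2 i⟩

theorem dTri_le_dD (hx : x' ∈ Dtri) (hz : z' ∈ Dtri) :
    dTri T l i (T.σ i x') (T.σ i z') ≤ dD (lRes T l i) x' z' := by
  refine csInf_le ⟨0, ?_⟩ ⟨x', hx, z', hz, rfl, rfl, rfl⟩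
  rintro _ ⟨_, _, _, _, _, _, rfl⟩
  exact dD_nonneg _ _ _

theorem exists_dD_lt_of_dTri_lt (hx : x ∈ T.σ i '' Dtri) (hz : z ∈ T.σ i '' Dtri) {c : ℝ}
    (h : dTri T l i x z < c) :
    ∃ x' ∈ Dtri, ∃ z' ∈ Dtri, T.σ i x' = x ∧ T.σ i z' = z ∧ dD (lRes T l i) x' z' < c := by
  have hne : {r | ∃ x' ∈ Dtri, ∃ z' ∈ Dtri,
      T.σ i x' = x ∧ T.σ i z' = z ∧ r = dD (lRes T l i) x' z'}.Nonempty := by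
    obtain ⟨x', hx', hσx⟩ := hx
    obtain ⟨z', hz', hσz⟩ := hz
    exact ⟨_, x', hx', z', hz', hσx, hσz, rfl⟩
  obtain ⟨_, ⟨x', hx', z', hz', hσx, hσz, rfl⟩, hlt⟩ := exists_lt_of_csInf_lt hne h
  exact ⟨x', hx', z', hz', hσx, hσz, hlt⟩

theorem rObs_nonneg (l : Set E2 → ℝ) (x : E2) : 0 ≤ rObs l x := by
  apply Real.sInf_nonneg
  rintro _ ⟨y, -, rfl⟩
  exact dD_nonneg l x y

theorem rS_le_dD (hx : x' ∈ Dtri) (hz : z' ∈ Kset x') :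
    rS T l (T.σ i x') ≤ dD (lRes T l i) x' z' := by
  calc rS T l (T.σ i x')
    _ ≤ rObs (lRes T l i) x' := by
      refine csInf_le ⟨0, ?_⟩ ⟨i, x', hx, rfl, rfl⟩
      rintro _ ⟨_, _, _, _, rfl⟩
      exact rObs_nonneg _ _
    _ ≤ dD (lRes T l i) x' z' := by
      refine csInf_le ⟨0, ?_⟩ ⟨z', hz, rfl⟩
      rintro _ ⟨_, _, rfl⟩
      exact dD_nonneg _ _ _

theorem mem_edge_of_dD_lt_rS (hx : x' ∈ Dtri)
    (hlt : dD (lRes T l i) x' z' < rS T l (T.σ i x')) {e : Set E2} (he : e ∈ E0) (hz : z' ∈ e) :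
    x' ∈ e := by
  by_contra hxe
  exact hlt.not_ge (rS_le_dD hx ⟨e, ⟨he, hxe⟩, hz⟩)

theorem exists_dD_eq_of_image_eo_eq (hl : ∀ k, Realizable (lRes T l k)) {e e' : Set E2}
    (he : e ∈ E0) (he' : e' ∈ E0) (h : T.σ i '' eo e = T.σ j '' eo e')
    (hx : x' ∈ e) (hz : z' ∈ e) :
    ∃ x'' ∈ Dtri, ∃ z'' ∈ Dtri, T.σ j x'' = T.σ i x' ∧ T.σ j z'' = T.σ i z' ∧
      dD (lRes T l j) x'' z'' = dD (lRes T l i) x' z' := by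
  obtain ⟨A, hA, hσ⟩ := T.glue i j e he e' he' h
  have hmem : ∀ {y}, y ∈ e → A y ∈ Dtri := fun hy =>
    edge_subset_Dtri he' (hA ▸ mem_image_of_mem A hy)
  have hlen : lRes T l i e = lRes T l j e' := by
    rw [lRes, lRes, ← hA, image_image, image_congr hσ]
  exact ⟨A x', hmem hx, A z', hmem hz, hσ x' hx, hσ z' hz,
    dD_map_eq_of_image_edge_eq (hl i) (hl j) he he' hlen hA hx hz⟩

theorem exists_dD_eq_of_dD_lt_rS (hl : ∀ k, Realizable (lRes T l k)) (hx : x' ∈ Dtri)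
    (hz : z' ∈ Dtri) (hlt : dD (lRes T l i) x' z' < rS T l (T.σ i x'))
    (hzj : T.σ i z' ∈ T.σ j '' Dtri) :
    ∃ x'' ∈ Dtri, ∃ z'' ∈ Dtri, T.σ j x'' = T.σ i x' ∧ T.σ j z'' = T.σ i z' ∧
      dD (lRes T l j) x'' z'' = dD (lRes T l i) x' z' := by
  have hedge : ∀ e ∈ E0, z' ∈ e → x' ∈ e := fun e he => mem_edge_of_dD_lt_rS hx hlt he
  obtain ⟨w, hw, hwz⟩ := hzj
  rcases mem_Do_or_mem_V0_or_mem_eo hz with hzDo | hzV | ⟨e, he, hze⟩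
  · obtain rfl : i = j := T.eq_of_apply_eq_of_mem_Do hzDo hw hwz
    exact ⟨x', hx, z', hz, rfl, rfl, rfl⟩
  · obtain rfl : x' = z' := eq_of_mem_V0_of_forall_edge hzV hedge
    exact ⟨w, hw, w, hw, hwz, hwz, by rw [dD_self, dD_self]⟩
  · obtain ⟨e', he', hee'⟩ := T.exists_image_eo_eq he hze hw hwz
    exact exists_dD_eq_of_image_eo_eq hl he he' hee' (hedge e he hze.1) hze.1

theorem mem_image_and_dTri_le_of_lt_rS (hl : ∀ k, Realizable (lRes T l k))
    (hx : x ∈ T.σ i '' Dtri) (hz : z ∈ T.σ i '' Dtri) (hlt : dTri T l i x z < rS T l x)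
    (hzj : z ∈ T.σ j '' Dtri) :
    x ∈ T.σ j '' Dtri ∧ dTri T l j x z ≤ dTri T l i x z := by
  have transfer : ∀ c, dTri T l i x z < c → x ∈ T.σ j '' Dtri ∧ dTri T l j x z ≤ c := by
    intro c hc
    obtain ⟨x', hx', z', hz', rfl, rfl, hd⟩ := exists_dD_lt_of_dTri_lt hx hz (lt_min hlt hc)
    obtain ⟨hdr, hdc⟩ := lt_min_iff.1 hd
    obtain ⟨x'', hx'', z'', hz'', hσx, hσz, hdd⟩ :=
      exists_dD_eq_of_dD_lt_rS hl hx' hz' hdr hzj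
    refine ⟨⟨x'', hx'', hσx⟩, ?_⟩
    rw [← hσx, ← hσz]
    exact (dTri_le_dD hx'' hz'').trans (hdd.trans_lt hdc).le
  exact ⟨(transfer _ hlt).1, le_of_forall_gt_imp_ge_of_dense fun c hc => (transfer c hc).2⟩

end GluedDistance

theorem dTri_eq_of_lt_rS_general
    {S : Type} [TopologicalSpace S] {n : ℕ} (T : Triangulation S n) (l : Set S → ℝ)
    (hl : ∀ k, Realizable (lRes T l k)) (i j : Fin n) (x z : S)
    (hx : x ∈ T.σ i '' Dtri) (hz : z ∈ T.σ i '' Dtri)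
    (hlt : dTri T l i x z < rS T l x)
    (hzj : z ∈ T.σ j '' Dtri) :
    x ∈ T.σ j '' Dtri ∧ dTri T l i x z = dTri T l j x z := by
  obtain ⟨hxj, hji⟩ := mem_image_and_dTri_le_of_lt_rS hl hx hz hlt hzj
  have hij := (mem_image_and_dTri_le_of_lt_rS hl hxj hzj (hji.trans_lt hlt) hz).2
  exact ⟨hxj, hij.antisymm hji⟩

/-- Corollary 3.3: if `x, z ∈ σᵢ(D)`, `dᵢ(x,z) < r(x)`, and `z ∈ σⱼ(D)`,
then `x ∈ σⱼ(D)` and `dᵢ(x,z) = dⱼ(x,z)`. -/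
theorem dTri_eq_of_lt_rS
    {S : Type} [TopologicalSpace S] [CompactSpace S] [T2Space S] [ConnectedSpace S]
    {n : ℕ} (T : Triangulation S n) (l : Set S → ℝ) (hl : TriIneqT T l)
    (i j : Fin n) (x z : S)
    (hx : x ∈ T.σ i '' Dtri) (hz : z ∈ T.σ i '' Dtri)
    (hlt : dTri T l i x z < rS T l x)
    (hzj : z ∈ T.σ j '' Dtri) :
    x ∈ T.σ j '' Dtri ∧ dTri T l i x z = dTri T l j x z :=
  dTri_eq_of_lt_rS_general T l hl.realizable i j x z hx hz hlt hzj
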